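/- arXiv:2407.04817 — 3 statements merged into one kernel-verified Lean document; each statement's English description precedes it below -/
import Mathlib

section
/- Let (Q,I) be a gentle bound quiver with marked ribbon graph (G,≤) = △(Q,I) and Cartan matrix C, identify E(G) with Q0, and let Ĵ be the E(G) × V(G) integer matrix whose column at a vertex α of G is the incidence vector inc(Ǒ_α) of the unique anti-walk Ǒ_α of (G,≤) with target vertex α. Then C^tr · Ĵ = Inc(G). -/
set_option autoImplicit false

attribute [local instance] Classical.propDecidable

/-- A bound-quiver datum: a quiver (source and target maps on a set of arrows) together
with a set of length-two relations; `rel a b` means that the length-two path `ab`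
(composable, i.e. `src a = tgt b`; paths are written from right to left) lies in the
generating set of relations of the ideal `I`. -/
structure BQuiv (V A : Type) where
  src : A → V
  tgt : A → V
  rel : A → A → Prop

namespace BQuiv

variable {V A : Type}

/-- `l` is (the list of arrows of) a path of the quiver, written from right to left:
`l = [a₁, a₂, …, a_ℓ]` represents `a₁a₂⋯a_ℓ` and we ask `src aₜ = tgt aₜ₊₁`. -/
def PathChain (Q : BQuiv V A) (l : List A) : Prop :=
  l.Chain' (fun a b => Q.src a = Q.tgt b)

/-- The degree of a vertex: the number of outgoing plus the number of incoming arrows. -/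
noncomputable def deg (Q : BQuiv V A) (v : V) : ℕ :=
  Nat.card {a : A // Q.src a = v} + Nat.card {a : A // Q.tgt a = v}

/-- `(Q, I)` is a gentle bound quiver. -/
structure IsGentle (Q : BQuiv V A) : Prop where
  /-- relations are composable length-two paths -/
  rel_comp : ∀ a b, Q.rel a b → Q.src a = Q.tgt b
  /-- at most two outgoing arrows at every vertex -/
  out_le : ∀ v, Nat.card {a : A // Q.src a = v} ≤ 2
  /-- at most two incoming arrows at every vertex -/
  in_le : ∀ v, Nat.card {a : A // Q.tgt a = v} ≤ 2
  /-- for every arrow `b` there is at most one arrow `a` with `ab ∉ I` -/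
  unique_nonrel_post : ∀ b a a', Q.src a = Q.tgt b → Q.src a' = Q.tgt b →
    ¬ Q.rel a b → ¬ Q.rel a' b → a = a'
  /-- for every arrow `b` there is at most one arrow `c` with `bc ∉ I` -/
  unique_nonrel_pre : ∀ b c c', Q.src b = Q.tgt c → Q.src b = Q.tgt c' →
    ¬ Q.rel b c → ¬ Q.rel b c' → c = c'
  /-- for every arrow `b` there is at most one arrow `a` with `ab ∈ I` -/
  unique_rel_post : ∀ b a a', Q.rel a b → Q.rel a' b → a = a'
  /-- for every arrow `b` there is at most one arrow `c` with `bc ∈ I` -/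
  unique_rel_pre : ∀ b c c', Q.rel b c → Q.rel b c' → c = c'
  /-- admissibility: there is `m ≥ 2` such that every path of length `m` contains a
  length-two subpath lying in the relation set -/
  admissible : ∃ m, 2 ≤ m ∧ ∀ l : List A, l.length = m → Q.PathChain l →
    ¬ l.Chain' (fun a b => ¬ Q.rel a b)
  /-- the quiver is connected -/
  connected : ∀ u v : V, Relation.ReflTransGen
    (fun x y => ∃ a, (Q.src a = x ∧ Q.tgt a = y) ∨ (Q.src a = y ∧ Q.tgt a = x)) u v
  /-- the quiver has at least one arrow -/
  has_arrow : Nonempty A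

/-- A path of the quiver `Q`, with a base (source) vertex so that trivial paths make
sense.  The arrows are written from right to left. -/
structure Path (Q : BQuiv V A) where
  base : V
  arrows : List A
  chain : arrows.Chain' (fun a b => Q.src a = Q.tgt b)
  base_eq : ∀ a, arrows.getLast? = some a → Q.src a = base

variable {Q : BQuiv V A}

/-- The source vertex of a path. -/
def Path.srcV (p : Path Q) : V := p.base

/-- The target vertex of a path. -/
def Path.tgtV (p : Path Q) : V := p.arrows.head?.elim p.base Q.tgt

/-- The vertex of a path sitting between its first `n` arrows and the rest:
the center of the corresponding split of the path. -/
def Path.vertexAt (p : Path Q) (n : ℕ) : V :=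
  (p.arrows.drop n).head?.elim p.base Q.tgt

/-- A path is permitted if none of its length-two subpaths is a relation. -/
def Path.Permitted (p : Path Q) : Prop :=
  p.arrows.Chain' (fun a b => ¬ Q.rel a b)

/-- A path is forbidden if each of its length-two subpaths is a relation. -/
def Path.Forbidden (p : Path Q) : Prop :=
  p.arrows.Chain' (fun a b => Q.rel a b)

/-- Permitted threads: maximal non-trivial permitted paths, together with the trivial
paths `e_i` at vertices `i` with `deg i = 1`, or `deg i = 2` with the two arrows
`α, β` at `i` satisfying `src α = tgt β = i` and `αβ ∉ I`. -/
def IsPermThread (Q : BQuiv V A) (p : Path Q) : Prop :=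
  (p.arrows ≠ [] ∧ p.Permitted ∧
    (∀ a b, p.arrows.head? = some b → Q.src a = Q.tgt b → Q.rel a b) ∧
    (∀ a c, p.arrows.getLast? = some a → Q.src a = Q.tgt c → Q.rel a c)) ∨
  (p.arrows = [] ∧ (Q.deg p.base = 1 ∨ (Q.deg p.base = 2 ∧
    ∃ α β, Q.src α = p.base ∧ Q.tgt β = p.base ∧ ¬ Q.rel α β)))

/-- Forbidden threads: maximal non-trivial forbidden paths, together with the trivial
paths `e_i` at vertices `i` with `deg i = 1`, or `deg i = 2` with the two arrows
`α, β` at `i` satisfying `src α = tgt β = i` and `αβ ∈ I`. -/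
def IsForbThread (Q : BQuiv V A) (p : Path Q) : Prop :=
  (p.arrows ≠ [] ∧ p.Forbidden ∧
    (∀ a b, p.arrows.head? = some b → Q.src a = Q.tgt b → ¬ Q.rel a b) ∧
    (∀ a c, p.arrows.getLast? = some a → Q.src a = Q.tgt c → ¬ Q.rel a c)) ∨
  (p.arrows = [] ∧ (Q.deg p.base = 1 ∨ (Q.deg p.base = 2 ∧
    ∃ α β, Q.src α = p.base ∧ Q.tgt β = p.base ∧ Q.rel α β)))

end BQuiv

namespace BQuiv

variable {V A : Type}

/-- The type of permitted threads of `(Q, I)`: the vertices of the associated marked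
ribbon graph `△(Q, I)`. -/
def PThread (Q : BQuiv V A) : Type := {p : Path Q // IsPermThread Q p}

/-- The type of split permitted threads of `(Q, I)`: a permitted thread together with a
cut position.  These are the half-edges of the associated marked ribbon graph
`△(Q, I)`. -/
def PSplit (Q : BQuiv V A) : Type := {x : PThread Q × ℕ // x.2 ≤ x.1.1.arrows.length}

/-- The thread (vertex of `△(Q, I)`) over which a split permitted thread lies. -/
def PSplit.thread {Q : BQuiv V A} (x : PSplit Q) : PThread Q := x.1.1

/-- The cut position of a split permitted thread. -/
def PSplit.idx {Q : BQuiv V A} (x : PSplit Q) : ℕ := x.1.2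

/-- The center of a split permitted thread `(η″, η′)`: the vertex `s(η″) = t(η′)`.
The centers realize the bijection between the edges of `△(Q, I)` and the vertices
of `Q`. -/
def PSplit.center {Q : BQuiv V A} (x : PSplit Q) : V :=
  x.1.1.1.vertexAt x.1.2

end BQuiv

namespace BQuiv

variable {V A : Type}

/-- The Cartan matrix of the gentle algebra `kQ/I`: its `(i, j)` entry is the number of
permitted paths with source `j` and target `i` (which equals `dim_k Hom(P_i, P_j)`). -/
noncomputable def cartan (Q : BQuiv V A) : Matrix V V ℤ :=
  fun i j => (Nat.card {p : Path Q // p.Permitted ∧ p.base = j ∧ p.tgtV = i} : ℤ)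

/-- The (edge-vertex) incidence matrix of the marked ribbon graph `△(Q, I)`, with edges
identified with `Q₀` (via centers) and vertices with the permitted threads (transported
along a bijection `e` with a finite index type `W`): the entry at `(i, w)` is the number
of half-edges of the edge `i` incident to the vertex `e w`, i.e. the number of split
permitted threads with center `i` lying over the thread `e w`. -/
noncomputable def dInc (Q : BQuiv V A) {W : Type} (e : W ≃ PThread Q) : Matrix V W ℤ :=
  fun i w => (Nat.card {x : PSplit Q // x.center = i ∧ x.thread = e w} : ℤ)

end BQuiv

namespace BQuiv

variable {V A : Type}

/-- An ordered edge of the marked ribbon graph `△(Q, I)`: a pair `(h′, h″)` of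
half-edges with `h″ = ι h′`, i.e. a pair of distinct split permitted threads with the
same center.  The first component is the target half-edge, the second the source
half-edge. -/
def DOE (Q : BQuiv V A) : Type :=
  {p : PSplit Q × PSplit Q // p.1 ≠ p.2 ∧ p.1.center = p.2.center}

/-- The target half-edge of an ordered edge of `△(Q, I)`. -/
def DOE.tS {Q : BQuiv V A} (i : DOE Q) : PSplit Q := i.1.1

/-- The source half-edge of an ordered edge of `△(Q, I)`. -/
def DOE.sS {Q : BQuiv V A} (i : DOE Q) : PSplit Q := i.1.2

/-- The target vertex (a permitted thread) of an ordered edge of `△(Q, I)`. -/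
def DOE.tvx {Q : BQuiv V A} (i : DOE Q) : PThread Q := i.1.1.thread

/-- The source vertex (a permitted thread) of an ordered edge of `△(Q, I)`. -/
def DOE.svx {Q : BQuiv V A} (i : DOE Q) : PThread Q := i.1.2.thread

/-- The underlying (unordered) edge of an ordered edge of `△(Q, I)`, identified with a
vertex of `Q` via centers. -/
def DOE.ctr {Q : BQuiv V A} (i : DOE Q) : V := i.1.1.center

/-- The inverse of an ordered edge of `△(Q, I)`. -/
def DOE.inv {Q : BQuiv V A} (i : DOE Q) : DOE Q :=
  ⟨(i.1.2, i.1.1), ⟨Ne.symm i.2.1, i.2.2.symm⟩⟩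

/-- `l` is (the list of ordered edges of) a walk of `△(Q, I)`, written from right to
left. -/
def IsDWalk (Q : BQuiv V A) (l : List (DOE Q)) : Prop :=
  l.Chain' (fun i j => DOE.svx i = DOE.tvx j)

/-- The walk `l` of `△(Q, I)` is reduced. -/
def IsDRed (Q : BQuiv V A) (l : List (DOE Q)) : Prop :=
  l.Chain' (fun i j => j ≠ DOE.inv i)

/-- `y` is the direct successor of `x` in the half-edge order of `△(Q, I)`: `x` and `y`
lie over the same thread and `y` covers `x` (the half-edge `h^α_t` corresponds to the
split `(α, t)` and `h^α_t < h^α_{t-1}` is a covering). -/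
def DSucc {Q : BQuiv V A} (x y : PSplit Q) : Prop :=
  x.thread = y.thread ∧ x.idx = y.idx + 1

/-- Anti-walks of `△(Q, I)`: non-trivial walks `i₁⋯i_{L+1}` in which the source
half-edge of `iₜ` is the direct successor of the target half-edge of `iₜ₊₁` with
respect to `≤`, maximal with this property. -/
def IsAntiDW (Q : BQuiv V A) (l : List (DOE Q)) : Prop :=
  l ≠ [] ∧ IsDWalk Q l ∧
  l.Chain' (fun i j => DSucc (DOE.tS j) (DOE.sS i)) ∧
  (∀ i, l.head? = some i → ∀ i0 : DOE Q, ¬ DSucc (DOE.tS i) (DOE.sS i0)) ∧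
  (∀ i, l.getLast? = some i → ∀ i2 : DOE Q, ¬ DSucc (DOE.tS i2) (DOE.sS i)) 

/-- The incidence vector of a walk `w = i₁⋯i_{L+1}` of `△(Q, I)`:
`inc(w) = Σₜ (-1)ᵗ e_{ē(i_{t+1})} ∈ ℤ^{Q₀}`. -/
noncomputable def incVec {Q : BQuiv V A} : List (DOE Q) → V → ℤ
  | [] => fun _ => 0
  | i :: l => fun v => (if DOE.ctr i = v then 1 else 0) - incVec l v

end BQuiv

open BQuiv
open scoped Matrix

/-! Fix a vertex `v` of the quiver and the two half-edges `h′`, `h″` with center `v`. A nontrivial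
permitted path ending at `v` runs along the one permitted thread through its last arrow, so it is
determined by that arrow and its length. Hence, counting the trivial path on the side of `h′`, the
`v`-row of `C` counts the vertices of the thread of `h′` up to and including its cut, plus the
vertices of the thread of `h″` strictly before its cut (positions in arrow lists run backwards).
Along an anti-walk, the vertices strictly before the cut of a source half-edge are those up to and
including the cut of the target half-edge of the next ordered edge, so the alternating sum in
`Cᵀ · inc(w)` telescopes. By maximality the leftover at the far end is empty, and what remains at
the target end is the whole thread `α`, that is the column of `Inc(G)` at `α`. -/

section MaximalChain

variable {A : Type*} {R : A → A → Prop} {l u r u' r' : List A} {a b : A}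

/-- An `R`-chain that cannot be extended at either end. When `R a b` says that `ab` is a
permitted path, these are the arrow lists of the permitted threads; the empty list is allowed, so
that the trivial threads are covered as well. -/
structure IsMaximalChain (R : A → A → Prop) (l : List A) : Prop where
  isChain : l.IsChain R
  not_rel_head : ∀ b, l.head? = some b → ∀ a, ¬ R a b
  not_rel_getLast : ∀ a, l.getLast? = some a → ∀ b, ¬ R a b

namespace IsMaximalChain

theorem reverse (h : IsMaximalChain R l) : IsMaximalChain (flip R) l.reverse where
  isChain := List.isChain_reverse.2 h.isChain
  not_rel_head := by simpa only [List.head?_reverse, flip] using h.not_rel_getLast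
  not_rel_getLast := by simpa only [List.getLast?_reverse, flip] using h.not_rel_head

theorem rel_of_append (h : IsMaximalChain R (u ++ r)) (ha : u.getLast? = some a)
    (hb : r.head? = some b) : R a b :=
  (List.isChain_append.1 h.isChain).2.2 a ha b hb

theorem head?_right_of_rel (hR : Relator.RightUnique R) (h : IsMaximalChain R (u ++ r))
    (hab : R a b) (ha : u.getLast? = some a) : r.head? = some b := by
  cases hr : r.head? with
  | none =>
    obtain rfl := List.head?_eq_none_iff.1 hr
    exact absurd hab (h.not_rel_getLast a (by rwa [List.append_nil]) b)
  | some c => rw [hR (h.rel_of_append ha hr) hab]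

theorem getLast?_left_iff_head?_right (hR : Relator.BiUnique R)
    (h : IsMaximalChain R (u ++ r)) (hab : R a b) :
    u.getLast? = some a ↔ r.head? = some b := by
  refine ⟨h.head?_right_of_rel hR.2 hab, fun hb => ?_⟩
  have hrev : IsMaximalChain (flip R) (r.reverse ++ u.reverse) := by
    simpa only [List.reverse_append] using h.reverse
  simpa only [List.head?_reverse] using
    hrev.head?_right_of_rel hR.1.flip hab (by rwa [List.getLast?_reverse])

theorem prefix_right (hR : Relator.RightUnique R) (h : IsMaximalChain R (u ++ r))
    (hl : l.IsChain R) (hhead : ∀ b, l.head? = some b → r.head? = some b) : l <+: r := by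
  induction l generalizing u r with
  | nil => exact List.nil_prefix
  | cons b t ih =>
    obtain ⟨s, rfl⟩ := List.head?_eq_some_iff.1 (hhead b rfl)
    rw [List.isChain_cons] at hl
    have h' : IsMaximalChain R ((u ++ [b]) ++ s) := by
      rwa [List.append_assoc, List.singleton_append]
    refine (List.prefix_cons_inj b).2 (ih h' hl.2 fun c hc => ?_)
    exact h'.head?_right_of_rel hR (hl.1 c hc) List.getLast?_concat

theorem right_eq_right (hR : Relator.RightUnique R) (h : IsMaximalChain R (u ++ r))
    (h' : IsMaximalChain R (u' ++ r')) (hhead : r.head? = r'.head?) : r = r' := by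
  have hpre := h'.prefix_right hR h.isChain.right_of_append (by simp [hhead])
  have hpre' := h.prefix_right hR h'.isChain.right_of_append (by simp [hhead])
  exact hpre.eq_of_length_le hpre'.length_le

theorem left_eq_left (hR : Relator.LeftUnique R) (h : IsMaximalChain R (u ++ r))
    (h' : IsMaximalChain R (u' ++ r')) (hlast : u.getLast? = u'.getLast?) : u = u' := by
  have hrev : IsMaximalChain (flip R) (r.reverse ++ u.reverse) := by
    simpa only [List.reverse_append] using h.reverse
  have hrev' : IsMaximalChain (flip R) (r'.reverse ++ u'.reverse) := by
    simpa only [List.reverse_append] using h'.reverse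
  exact List.reverse_injective
    (right_eq_right hR.flip hrev hrev' (by simpa only [List.head?_reverse] using hlast))

end IsMaximalChain

theorem exists_isMaximalChain_mem {m : ℕ} (hm : ∀ l : List A, l.IsChain R → l.length < m)
    (b : A) : ∃ l, IsMaximalChain R l ∧ b ∈ l := by
  obtain ⟨l, ⟨hl, hb⟩, hmax⟩ := (measure fun l : List A => m - l.length).wf.has_min
    {l | l.IsChain R ∧ b ∈ l} ⟨[b], List.isChain_singleton b, List.mem_singleton_self b⟩
  have not_longer : ∀ l' : List A, l'.IsChain R → b ∈ l' → l'.length ≤ l.length := by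
    intro l' hl' hb'
    have : ¬ m - l'.length < m - l.length := hmax l' ⟨hl', hb'⟩
    have := hm l hl
    omega
  refine ⟨l, ⟨hl, fun c hc a hac => ?_, fun a ha c hac => ?_⟩, hb⟩
  · have hchain : (a :: l).IsChain R :=
      List.isChain_cons.2 ⟨fun d hd => Option.some.inj (hc.symm.trans hd) ▸ hac, hl⟩
    have := not_longer _ hchain (List.mem_cons_of_mem a hb)
    simp at this
  · have hchain : (l ++ [c]).IsChain R := by
      refine List.isChain_append.2 ⟨hl, List.isChain_singleton c, fun d hd e he => ?_⟩
      obtain rfl := Option.some.inj (ha.symm.trans hd)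
      obtain rfl := Option.some.inj he
      exact hac
    have := not_longer _ hchain (List.mem_append_left [c] hb)
    simp at this

end MaximalChain

theorem natCard_subtype_some_eq {A : Type*} (o : Option A) :
    Nat.card {a // o = some a} = o.elim 0 fun _ => 1 := by
  cases o <;> simp

namespace BQuiv

variable {V A : Type} {Q : BQuiv V A}

/-- The length-two path `ab` exists and is permitted. -/
def Permits (Q : BQuiv V A) (a b : A) : Prop :=
  Q.src a = Q.tgt b ∧ ¬ Q.rel a b

theorem isChain_permits_iff {l : List A} :
    l.IsChain Q.Permits ↔
      l.IsChain (fun a b => Q.src a = Q.tgt b) ∧ l.IsChain (fun a b => ¬ Q.rel a b) := by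
  simp only [List.isChain_iff_getElem, Permits, forall_and]

theorem IsGentle.biUnique_permits (hQ : Q.IsGentle) : Relator.BiUnique Q.Permits :=
  ⟨fun a a' b h h' => hQ.unique_nonrel_post b a a' h.1 h'.1 h.2 h'.2,
    fun b c c' h h' => hQ.unique_nonrel_pre b c c' h.1 h'.1 h.2 h'.2⟩

theorem IsGentle.exists_length_lt (hQ : Q.IsGentle) :
    ∃ m, ∀ l : List A, l.IsChain Q.Permits → l.length < m := by
  obtain ⟨m, -, hm⟩ := hQ.admissible
  refine ⟨m, fun l hl => lt_of_not_ge fun hml => ?_⟩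
  obtain ⟨hpath, hperm⟩ := isChain_permits_iff.1 (hl.take m)
  exact hm (l.take m) (by simpa using hml) hpath hperm

/-! ### Paths -/

theorem Path.ext_of_vertexAt {p q : Path Q} (harr : p.arrows = q.arrows) {n : ℕ}
    (hn : p.vertexAt n = q.vertexAt n) : p = q := by
  have hbase : p.base = q.base := by
    cases hlast : p.arrows.getLast? with
    | none =>
      have hp : p.arrows = [] := List.getLast?_eq_none_iff.1 hlast
      have hq : q.arrows = [] := harr ▸ hp
      simpa [vertexAt, hp, hq] using hn
    | some a => exact (p.base_eq a hlast).symm.trans (q.base_eq a (harr ▸ hlast))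
  cases p; cases q; cases harr; cases hbase; rfl

theorem Path.vertexAt_of_head?_drop {p : Path Q} {n : ℕ} {b : A}
    (hb : (p.arrows.drop n).head? = some b) : p.vertexAt n = Q.tgt b := by
  rw [vertexAt, hb, Option.elim_some]

theorem Path.vertexAt_of_getLast?_take {p : Path Q} {n : ℕ} {a : A}
    (ha : (p.arrows.take n).getLast? = some a) : p.vertexAt n = Q.src a := by
  have hsplit := p.arrows.take_append_drop n
  cases hdrop : (p.arrows.drop n).head? with
  | none =>
    rw [List.head?_eq_none_iff.1 hdrop, List.append_nil] at hsplit
    rw [vertexAt, hdrop, Option.elim_none, p.base_eq a (hsplit ▸ ha)]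
  | some b =>
    have hchain : (p.arrows.take n ++ p.arrows.drop n).IsChain
        (fun a b => Q.src a = Q.tgt b) := hsplit.symm ▸ p.chain
    rw [vertexAt_of_head?_drop hdrop]
    exact ((List.isChain_append.1 hchain).2.2 a ha b hdrop).symm

/-- The subpath of `p` from its vertex at position `n` to its vertex at position `k ≤ n`.
For `n < k` this is the trivial path at position `n`. -/
def Path.slice (p : Path Q) (k n : ℕ) : Path Q where
  base := p.vertexAt n
  arrows := (p.arrows.take n).drop k
  chain := (List.IsChain.take p.chain n).drop k
  base_eq a ha := by
    rw [List.getLast?_drop, ite_eq_iff] at ha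
    obtain ⟨-, ⟨⟩⟩ | ⟨-, ha⟩ := ha
    exact (vertexAt_of_getLast?_take ha).symm

theorem Path.length_arrows_slice (p : Path Q) {k n : ℕ} (hn : n ≤ p.arrows.length) :
    (p.slice k n).arrows.length = n - k := by
  rw [slice, List.length_drop, List.length_take_of_le hn]

theorem Path.head?_arrows_slice (p : Path Q) {k n : ℕ} (hkn : k < n) :
    (p.slice k n).arrows.head? = (p.arrows.drop k).head? := by
  rw [slice, List.head?_drop, List.getElem?_take_of_lt hkn, List.head?_drop]

theorem Path.tgtV_slice (p : Path Q) {k n : ℕ} (hkn : k ≤ n) :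
    (p.slice k n).tgtV = p.vertexAt k := by
  obtain rfl | hlt := hkn.eq_or_lt
  · have hnil : (p.slice k k).arrows = [] := by
      rw [slice, List.drop_eq_nil_iff]
      exact List.length_take_le k p.arrows
    rw [tgtV, hnil]
    rfl
  · cases hhead : (p.arrows.drop k).head? with
    | some b =>
      rw [tgtV, p.head?_arrows_slice hlt, hhead, vertexAt_of_head?_drop hhead, Option.elim_some]
    | none =>
      have hdrop : p.arrows.drop n = [] := by
        have := List.head?_eq_none_iff.1 hhead
        rw [List.drop_eq_nil_iff] at this ⊢
        omega
      rw [tgtV, p.head?_arrows_slice hlt, hhead, vertexAt, hhead]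
      simp [slice, vertexAt, hdrop]

theorem Path.Permitted.slice {p : Path Q} (hp : p.Permitted) (k n : ℕ) :
    (p.slice k n).Permitted :=
  (List.IsChain.take hp n).drop k

/-- The positions from `k` on at which `p` visits the vertex `j`. -/
noncomputable def Path.visits (p : Path Q) (k : ℕ) (j : V) : Finset ℕ :=
  {n ∈ Finset.Icc k p.arrows.length | p.vertexAt n = j}

theorem Path.mem_visits {p : Path Q} {k n : ℕ} {j : V} :
    n ∈ p.visits k j ↔ (k ≤ n ∧ n ≤ p.arrows.length) ∧ p.vertexAt n = j := by
  rw [visits, Finset.mem_filter, Finset.mem_Icc]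

theorem Path.visits_eq_empty {p : Path Q} {k : ℕ} (hk : p.arrows.length < k) (j : V) :
    p.visits k j = ∅ := by
  rw [visits, Finset.Icc_eq_empty_of_lt hk, Finset.filter_empty]

theorem Path.visits_anti {p : Path Q} {k k' : ℕ} (hk : k ≤ k') (j : V) :
    p.visits k' j ⊆ p.visits k j :=
  Finset.filter_subset_filter _ (Finset.Icc_subset_Icc_left hk)

theorem Path.injOn_slice (p : Path Q) (k : ℕ) (j : V) : Set.InjOn (p.slice k) (p.visits k j) := by
  intro n hn n' hn' heq
  have hlen := congrArg (fun q : Path Q => q.arrows.length) heq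
  rw [Finset.mem_coe, mem_visits] at hn hn'
  rw [p.length_arrows_slice hn.1.2, p.length_arrows_slice hn'.1.2] at hlen
  omega

/-! ### Threads and their splits -/

/-- The condition under which `v` carries a trivial permitted thread. -/
def HasTrivialThread (Q : BQuiv V A) (v : V) : Prop :=
  Q.deg v = 1 ∨ (Q.deg v = 2 ∧ ∃ α β, Q.src α = v ∧ Q.tgt β = v ∧ ¬ Q.rel α β)

theorem IsPermThread.isMaximalChain {p : Path Q} (hp : IsPermThread Q p) :
    IsMaximalChain Q.Permits p.arrows := by
  obtain ⟨-, hperm, hhead, hlast⟩ | ⟨hnil, -⟩ := hp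
  · exact ⟨isChain_permits_iff.2 ⟨p.chain, hperm⟩, fun b hb a hab => hab.2 (hhead a b hb hab.1),
      fun a ha b hab => hab.2 (hlast a b ha hab.1)⟩
  · rw [hnil]
    exact ⟨List.isChain_nil, by simp, by simp⟩

theorem IsPermThread.permitted {p : Path Q} (hp : IsPermThread Q p) : p.Permitted :=
  (isChain_permits_iff.1 hp.isMaximalChain.isChain).2

theorem IsGentle.exists_isPermThread_mem (hQ : Q.IsGentle) (b : A) :
    ∃ p : Path Q, IsPermThread Q p ∧ b ∈ p.arrows := by
  obtain ⟨m, hm⟩ := hQ.exists_length_lt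
  obtain ⟨l, hl, hb⟩ := exists_isMaximalChain_mem hm b
  have hne : l ≠ [] := List.ne_nil_of_mem hb
  obtain ⟨hpath, hperm⟩ := isChain_permits_iff.1 hl.isChain
  refine ⟨⟨Q.src (l.getLast hne), l, hpath, fun a ha => ?_⟩, Or.inl ⟨hne, hperm, ?_, ?_⟩, hb⟩
  · rw [List.getLast_of_getLast?_eq_some ha]
  · exact fun a c hc hac => not_not.1 fun hrel => hl.not_rel_head c hc a ⟨hac, hrel⟩
  · exact fun a c ha hac => not_not.1 fun hrel => hl.not_rel_getLast a ha c ⟨hac, hrel⟩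

namespace PSplit

variable {x y z : PSplit Q} {a b : A} {v : V}

/-- The arrow of the thread that ends at the center of the split `(η″, η′)`, that is the last
arrow of `η′`, if there is one. Since paths are written from right to left, it is the head of the
list of `η′`. -/
def inArrow (x : PSplit Q) : Option A :=
  (x.thread.1.arrows.drop x.idx).head?

/-- The arrow of the thread that starts at the center of the split `(η″, η′)`, that is the first
arrow of `η″`, if there is one. -/
def outArrow (x : PSplit Q) : Option A :=
  (x.thread.1.arrows.take x.idx).getLast?

/-- A half-edge lying over a trivial permitted thread. -/
def IsTrivial (x : PSplit Q) : Prop :=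
  x.thread.1.arrows = []

theorem idx_le (x : PSplit Q) : x.idx ≤ x.thread.1.arrows.length :=
  x.2

theorem isMaximalChain (x : PSplit Q) :
    IsMaximalChain Q.Permits
      (x.thread.1.arrows.take x.idx ++ x.thread.1.arrows.drop x.idx) := by
  rw [List.take_append_drop]
  exact x.thread.2.isMaximalChain

theorem tgt_inArrow (hb : x.inArrow = some b) : Q.tgt b = x.center :=
  (Path.vertexAt_of_head?_drop hb).symm

theorem src_outArrow (ha : x.outArrow = some a) : Q.src a = x.center :=
  (Path.vertexAt_of_getLast?_take ha).symm

theorem permits_of_arrows (ha : x.outArrow = some a) (hb : x.inArrow = some b) : Q.Permits a b :=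
  x.isMaximalChain.rel_of_append ha hb

theorem outArrow_eq_some_iff_inArrow_eq_some (hQ : Q.IsGentle) (hab : Q.Permits a b) :
    x.outArrow = some a ↔ x.inArrow = some b :=
  x.isMaximalChain.getLast?_left_iff_head?_right hQ.biUnique_permits hab

theorem isTrivial_iff : x.IsTrivial ↔ x.inArrow = none ∧ x.outArrow = none := by
  rw [inArrow, outArrow, List.head?_eq_none_iff, List.getLast?_eq_none_iff, and_comm,
    ← List.append_eq_nil_iff, List.take_append_drop, IsTrivial]

theorem exists_arrow_of_not_isTrivial (hx : ¬ x.IsTrivial) :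
    (∃ b, x.inArrow = some b) ∨ ∃ a, x.outArrow = some a := by
  simpa only [isTrivial_iff, not_and_or, ← ne_eq, Option.ne_none_iff_exists'] using hx

theorem IsTrivial.hasTrivialThread (hx : x.IsTrivial) : Q.HasTrivialThread x.center := by
  have hcenter : x.center = x.thread.1.base := by
    rw [center, Path.vertexAt, show x.1.1.1.arrows = [] from hx, List.drop_nil, List.head?_nil,
      Option.elim_none, thread]
  obtain ⟨hne, -⟩ | ⟨-, h⟩ := x.thread.2
  · exact absurd hx hne
  · rwa [hcenter]

theorem exists_isTrivial_center_eq (hv : Q.HasTrivialThread v) :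
    ∃ x : PSplit Q, x.IsTrivial ∧ x.center = v :=
  ⟨⟨(⟨⟨v, [], List.isChain_nil, by simp⟩, Or.inr ⟨rfl, hv⟩⟩, 0), Nat.zero_le _⟩, rfl, rfl⟩

theorem ext_of_arrows (hQ : Q.IsGentle) (hin : x.inArrow = y.inArrow)
    (hout : x.outArrow = y.outArrow) (hc : x.center = y.center) : x = y := by
  have hleft := x.isMaximalChain.left_eq_left hQ.biUnique_permits.1 y.isMaximalChain hout
  have hright := x.isMaximalChain.right_eq_right hQ.biUnique_permits.2 y.isMaximalChain hin
  have hidx : x.idx = y.idx := by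
    have hlen := congrArg List.length hleft
    rwa [List.length_take_of_le x.idx_le, List.length_take_of_le y.idx_le] at hlen
  have harr : x.thread.1.arrows = y.thread.1.arrows := by
    rw [← List.take_append_drop x.idx x.thread.1.arrows, hleft, hright, List.take_append_drop]
  have hpath : x.thread.1 = y.thread.1 :=
    Path.ext_of_vertexAt harr (n := x.idx) (hc.trans (by rw [hidx]; rfl))
  exact Subtype.ext (Prod.ext (Subtype.ext hpath) hidx)

theorem eq_of_inArrow_eq_some (hQ : Q.IsGentle) (hx : x.inArrow = some b)
    (hy : y.inArrow = some b) : x = y := by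
  refine ext_of_arrows hQ (hx.trans hy.symm) (Option.ext fun a => ?_)
    ((tgt_inArrow hx).symm.trans (tgt_inArrow hy))
  constructor <;> intro ha
  · exact (outArrow_eq_some_iff_inArrow_eq_some hQ (permits_of_arrows ha hx)).2 hy
  · exact (outArrow_eq_some_iff_inArrow_eq_some hQ (permits_of_arrows ha hy)).2 hx

theorem eq_of_outArrow_eq_some (hQ : Q.IsGentle) (hx : x.outArrow = some a)
    (hy : y.outArrow = some a) : x = y := by
  refine ext_of_arrows hQ (Option.ext fun b => ?_) (hx.trans hy.symm)
    ((src_outArrow hx).symm.trans (src_outArrow hy))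
  constructor <;> intro hb
  · exact (outArrow_eq_some_iff_inArrow_eq_some hQ (permits_of_arrows hx hb)).1 hy
  · exact (outArrow_eq_some_iff_inArrow_eq_some hQ (permits_of_arrows hy hb)).1 hx

theorem IsTrivial.eq_of_center_eq (hQ : Q.IsGentle) (hx : x.IsTrivial) (hy : y.IsTrivial)
    (hc : x.center = y.center) : x = y := by
  rw [isTrivial_iff] at hx hy
  exact ext_of_arrows hQ (hx.1.trans hy.1.symm) (hx.2.trans hy.2.symm) hc

theorem exists_inArrow_eq_some (hQ : Q.IsGentle) (b : A) :
    ∃ x : PSplit Q, x.inArrow = some b := by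
  obtain ⟨p, hp, hb⟩ := hQ.exists_isPermThread_mem b
  obtain ⟨n, hn⟩ := List.mem_iff_getElem?.1 hb
  obtain ⟨hlt, -⟩ := List.getElem?_eq_some_iff.1 hn
  exact ⟨⟨(⟨p, hp⟩, n), hlt.le⟩, List.head?_drop.trans hn⟩

theorem exists_outArrow_eq_some (hQ : Q.IsGentle) (a : A) :
    ∃ x : PSplit Q, x.outArrow = some a := by
  obtain ⟨p, hp, ha⟩ := hQ.exists_isPermThread_mem a
  obtain ⟨n, hn⟩ := List.mem_iff_getElem?.1 ha
  obtain ⟨hlt, -⟩ := List.getElem?_eq_some_iff.1 hn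
  refine ⟨⟨(⟨p, hp⟩, n + 1), hlt⟩, ?_⟩
  change (p.arrows.take (n + 1)).getLast? = some a
  rw [List.getLast?_take, if_neg n.succ_ne_zero, Nat.add_sub_cancel, hn, Option.some_or]

/-! ### The two half-edges of an edge -/

theorem exists_ne_center_eq (hQ : Q.IsGentle) (x : PSplit Q) :
    ∃ y : PSplit Q, x ≠ y ∧ x.center = y.center := by
  by_contra! hcon
  have hunique : ∀ y : PSplit Q, y.center = x.center → y = x := fun y hy =>
    not_not.1 fun hne => hcon y (Ne.symm hne) hy.symm
  have hin : ∀ b, Q.tgt b = x.center ↔ x.inArrow = some b := fun b => by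
    refine ⟨fun hb => ?_, tgt_inArrow⟩
    obtain ⟨y, hy⟩ := exists_inArrow_eq_some hQ b
    rwa [← hunique y ((tgt_inArrow hy).symm.trans hb)]
  have hout : ∀ a, Q.src a = x.center ↔ x.outArrow = some a := fun a => by
    refine ⟨fun ha => ?_, src_outArrow⟩
    obtain ⟨y, hy⟩ := exists_outArrow_eq_some hQ a
    rwa [← hunique y ((src_outArrow hy).symm.trans ha)]
  have hdeg : Q.deg x.center = (x.outArrow.elim 0 fun _ => 1) + x.inArrow.elim 0 fun _ => 1 := by
    simp only [deg, hin, hout, natCard_subtype_some_eq]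
  have htrivial : x.IsTrivial ↔ Q.HasTrivialThread x.center := by
    refine ⟨IsTrivial.hasTrivialThread, fun h => ?_⟩
    obtain ⟨y, hy, hyx⟩ := exists_isTrivial_center_eq h
    rwa [← hunique y hyx]
  rw [isTrivial_iff, HasTrivialThread, hdeg] at htrivial
  cases hb : x.inArrow with
  | none => cases ha : x.outArrow <;> simp [ha, hb] at htrivial
  | some b =>
    cases ha : x.outArrow with
    | none => simp [ha, hb] at htrivial
    | some a =>
      simp only [ha, hb, Option.elim_some, reduceCtorEq, and_self, false_iff, not_or, not_and,
        not_exists] at htrivial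
      exact htrivial.2 trivial a b (src_outArrow ha) (tgt_inArrow hb) (permits_of_arrows ha hb).2

theorem rel_of_ne (hQ : Q.IsGentle) (hne : x ≠ y) (hc : x.center = y.center)
    (ha : x.outArrow = some a) (hb : y.inArrow = some b) : Q.rel a b := by
  by_contra hab
  have hpermits : Q.Permits a b :=
    ⟨(src_outArrow ha).trans (hc.trans (tgt_inArrow hb).symm), hab⟩
  exact hne (eq_of_inArrow_eq_some hQ
    ((outArrow_eq_some_iff_inArrow_eq_some hQ hpermits).1 ha) hb)

theorem eq_or_eq_of_not_isTrivial (hQ : Q.IsGentle) (hne : x ≠ y) (hc : x.center = y.center)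
    (ha : x.outArrow = some a) (hb : y.inArrow = some b) (hz : ¬ z.IsTrivial)
    (hzc : z.center = x.center) : z = x ∨ z = y := by
  by_contra! hcon
  have hab : Q.rel a b := rel_of_ne hQ hne hc ha hb
  obtain ⟨c, hzb⟩ | ⟨c, hza⟩ := exists_arrow_of_not_isTrivial hz
  · have hac : Q.rel a c := rel_of_ne hQ hcon.1.symm hzc.symm ha hzb
    obtain rfl := hQ.unique_rel_pre a b c hab hac
    exact hcon.2 (eq_of_inArrow_eq_some hQ hzb hb)
  · have hcb : Q.rel c b := rel_of_ne hQ hcon.2 (hzc.trans hc) hza hb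
    obtain rfl := hQ.unique_rel_post b a c hab hcb
    exact hcon.1 (eq_of_outArrow_eq_some hQ hza ha)

section Finite

variable [Finite A]

theorem eq_of_not_isTrivial_of_deg_eq_one (hQ : Q.IsGentle) (hdeg : Q.deg v = 1)
    (hx : ¬ x.IsTrivial) (hy : ¬ y.IsTrivial) (hxv : x.center = v) (hyv : y.center = v) :
    x = y := by
  have hcard : Nat.card ({a // Q.src a = v} ⊕ {a // Q.tgt a = v}) = 1 := Nat.card_sum.trans hdeg
  have hsub := (Nat.card_eq_one_iff_unique.1 hcard).1
  rcases exists_arrow_of_not_isTrivial hx with ⟨b, hb⟩ | ⟨a, ha⟩ <;>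
    rcases exists_arrow_of_not_isTrivial hy with ⟨b', hb'⟩ | ⟨a', ha'⟩
  · cases hsub.elim (.inr ⟨b, (tgt_inArrow hb).trans hxv⟩) (.inr ⟨b', (tgt_inArrow hb').trans hyv⟩)
    exact eq_of_inArrow_eq_some hQ hb hb'
  · cases hsub.elim (.inr ⟨b, (tgt_inArrow hb).trans hxv⟩) (.inl ⟨a', (src_outArrow ha').trans hyv⟩)
  · cases hsub.elim (.inl ⟨a, (src_outArrow ha).trans hxv⟩) (.inr ⟨b', (tgt_inArrow hb').trans hyv⟩)
  · cases hsub.elim (.inl ⟨a, (src_outArrow ha).trans hxv⟩)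
      (.inl ⟨a', (src_outArrow ha').trans hyv⟩)
    exact eq_of_outArrow_eq_some hQ ha ha'

theorem inArrow_eq_some_of_deg_eq_two (hQ : Q.IsGentle) (hdeg : Q.deg v = 2) (ha : Q.src a = v)
    (hb : Q.tgt b = v) (hab : ¬ Q.rel a b) (hx : ¬ x.IsTrivial) (hxv : x.center = v) :
    x.inArrow = some b := by
  have : Nonempty {c // Q.src c = v} := ⟨⟨a, ha⟩⟩
  have : Nonempty {c // Q.tgt c = v} := ⟨⟨b, hb⟩⟩
  have hout_pos : 0 < Nat.card {c // Q.src c = v} := Nat.card_pos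
  have hin_pos : 0 < Nat.card {c // Q.tgt c = v} := Nat.card_pos
  rw [deg] at hdeg
  have hout : Subsingleton {c // Q.src c = v} := Finite.card_le_one_iff_subsingleton.1 (by omega)
  have hin : Subsingleton {c // Q.tgt c = v} := Finite.card_le_one_iff_subsingleton.1 (by omega)
  obtain ⟨c, hc⟩ | ⟨c, hc⟩ := exists_arrow_of_not_isTrivial hx
  · cases hin.elim ⟨c, (tgt_inArrow hc).trans hxv⟩ ⟨b, hb⟩
    exact hc
  · cases hout.elim ⟨c, (src_outArrow hc).trans hxv⟩ ⟨a, ha⟩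
    exact (outArrow_eq_some_iff_inArrow_eq_some hQ ⟨ha.trans hb.symm, hab⟩).1 hc

theorem subsingleton_not_isTrivial (hQ : Q.IsGentle) (hv : Q.HasTrivialThread v) :
    {x : PSplit Q | x.center = v ∧ ¬ x.IsTrivial}.Subsingleton := by
  rintro x ⟨hxv, hx⟩ y ⟨hyv, hy⟩
  obtain hdeg | ⟨hdeg, a, b, ha, hb, hab⟩ := hv
  · exact eq_of_not_isTrivial_of_deg_eq_one hQ hdeg hx hy hxv hyv
  · exact eq_of_inArrow_eq_some hQ (inArrow_eq_some_of_deg_eq_two hQ hdeg ha hb hab hx hxv)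
      (inArrow_eq_some_of_deg_eq_two hQ hdeg ha hb hab hy hyv)

theorem encard_not_isTrivial_le_two (hQ : Q.IsGentle) (v : V) :
    {x : PSplit Q | x.center = v ∧ ¬ x.IsTrivial}.encard ≤ 2 := by
  have hin : {b | Q.tgt b = v}.encard ≤ 2 :=
    Set.encard_le_coe_iff_finite_ncard_le.2 ⟨Set.toFinite _, hQ.in_le v⟩
  have hout : {a | Q.src a = v}.encard ≤ 2 :=
    Set.encard_le_coe_iff_finite_ncard_le.2 ⟨Set.toFinite _, hQ.out_le v⟩
  rw [← (Option.some_injective A).encard_image] at hin hout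
  by_cases hall_in : ∀ x : PSplit Q, x.center = v → ¬ x.IsTrivial → ∃ b, x.inArrow = some b
  · refine (Set.encard_le_encard_of_injOn (f := inArrow) ?_ ?_).trans hin
    · rintro x ⟨hxv, hx⟩
      obtain ⟨b, hb⟩ := hall_in x hxv hx
      exact ⟨b, (tgt_inArrow hb).trans hxv, hb.symm⟩
    · rintro x ⟨hxv, hx⟩ y - hxy
      obtain ⟨b, hb⟩ := hall_in x hxv hx
      exact eq_of_inArrow_eq_some hQ hb (hxy.symm.trans hb)
  by_cases hall_out : ∀ x : PSplit Q, x.center = v → ¬ x.IsTrivial → ∃ a, x.outArrow = some a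
  · refine (Set.encard_le_encard_of_injOn (f := outArrow) ?_ ?_).trans hout
    · rintro x ⟨hxv, hx⟩
      obtain ⟨a, ha⟩ := hall_out x hxv hx
      exact ⟨a, (src_outArrow ha).trans hxv, ha.symm⟩
    · rintro x ⟨hxv, hx⟩ y - hxy
      obtain ⟨a, ha⟩ := hall_out x hxv hx
      exact eq_of_outArrow_eq_some hQ ha (hxy.symm.trans ha)
  -- Now `x` has only an outgoing arrow `a` and `y` only an incoming arrow `b`, so that `ab ∈ I`,
  -- and gentleness leaves no room for a third half-edge.
  push Not at hall_in hall_out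
  obtain ⟨x, hxv, hx, hx_in⟩ := hall_in
  obtain ⟨y, hyv, hy, hy_out⟩ := hall_out
  obtain ⟨a, ha⟩ := (exists_arrow_of_not_isTrivial hx).resolve_left (not_exists.2 hx_in)
  obtain ⟨b, hb⟩ := (exists_arrow_of_not_isTrivial hy).resolve_right (not_exists.2 hy_out)
  have hne : x ≠ y := fun h => hx_in b (h ▸ hb)
  have hsub : {z : PSplit Q | z.center = v ∧ ¬ z.IsTrivial} ⊆ {x, y} := fun z hz =>
    eq_or_eq_of_not_isTrivial hQ hne (hxv.trans hyv.symm) ha hb hz.2 (hz.1.trans hxv.symm)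
  exact (Set.encard_le_encard hsub).trans (Set.encard_pair hne).le

theorem encard_center_eq_le_two (hQ : Q.IsGentle) (v : V) :
    {x : PSplit Q | x.center = v}.encard ≤ 2 := by
  by_cases htrivial : ∃ x : PSplit Q, x.center = v ∧ x.IsTrivial
  · obtain ⟨x, rfl, hx⟩ := htrivial
    have hsub : {y : PSplit Q | y.center = x.center} ⊆
        insert x {y | y.center = x.center ∧ ¬ y.IsTrivial} := fun y hy => by
      by_cases hy_triv : y.IsTrivial
      · exact Or.inl (hy_triv.eq_of_center_eq hQ hx hy)
      · exact Or.inr ⟨hy, hy_triv⟩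
    calc
      _ ≤ (insert x {y : PSplit Q | y.center = x.center ∧ ¬ y.IsTrivial}).encard :=
        Set.encard_le_encard hsub
      _ ≤ {y : PSplit Q | y.center = x.center ∧ ¬ y.IsTrivial}.encard + 1 :=
        Set.encard_insert_le _ x
      _ ≤ 1 + 1 := by
        gcongr
        exact Set.encard_le_one_iff_subsingleton.2
          (subsingleton_not_isTrivial hQ hx.hasTrivialThread)
      _ = 2 := one_add_one_eq_two
  · push Not at htrivial
    refine (Set.encard_le_encard fun x hx => ?_).trans (encard_not_isTrivial_le_two hQ v)
    exact ⟨hx, htrivial x hx⟩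

theorem setOf_center_eq (hQ : Q.IsGentle) (hne : x ≠ y) (hc : x.center = y.center) :
    {z : PSplit Q | z.center = x.center} = {x, y} := by
  symm
  refine (Set.toFinite _).eq_of_subset_of_encard_le ?_ ?_
  · rintro z (rfl | rfl)
    exacts [rfl, hc.symm]
  · rw [Set.encard_pair hne]
    exact encard_center_eq_le_two hQ x.center

end Finite

/-! ### The Cartan matrix -/

/-- The subpath of the thread of `x` from its vertex at position `n ≥ x.idx` to the center
of `x`. -/
def segment (x : PSplit Q) (n : ℕ) : Path Q :=
  x.thread.1.slice x.idx n

theorem segment_eq_of_permitted (hQ : Q.IsGentle) {p : Path Q} (hp : p.Permitted)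
    (hpx : p.tgtV = x.center) (hhead : ∀ b, p.arrows.head? = some b → x.inArrow = some b) :
    x.idx + p.arrows.length ≤ x.thread.1.arrows.length ∧
      x.segment (x.idx + p.arrows.length) = p := by
  have hpre : p.arrows <+: x.thread.1.arrows.drop x.idx :=
    x.isMaximalChain.prefix_right hQ.biUnique_permits.2 (isChain_permits_iff.2 ⟨p.chain, hp⟩) hhead
  have hlen : x.idx + p.arrows.length ≤ x.thread.1.arrows.length := by
    have := hpre.length_le
    rw [List.length_drop] at this
    have := x.idx_le
    omega
  refine ⟨hlen, Path.ext_of_vertexAt (n := 0) ?_ ?_⟩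
  · change (x.thread.1.arrows.take (x.idx + p.arrows.length)).drop x.idx = p.arrows
    rw [List.drop_take, Nat.add_sub_cancel_left]
    exact (List.prefix_iff_eq_take.1 hpre).symm
  · exact (x.thread.1.tgtV_slice (Nat.le_add_right _ _)).trans hpx.symm

theorem setOf_permitted_eq [Finite A] (hQ : Q.IsGentle) (hne : x ≠ y)
    (hc : x.center = y.center) (j : V) :
    {p : Path Q | p.Permitted ∧ p.base = j ∧ p.tgtV = x.center} =
      x.segment '' x.thread.1.visits x.idx j ∪ y.segment '' y.thread.1.visits (y.idx + 1) j := by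
  ext p
  constructor
  · rintro ⟨hp, rfl, hpx⟩
    cases hhead : p.arrows.head? with
    | none =>
      obtain ⟨hlen, hseg⟩ := segment_eq_of_permitted hQ hp hpx (by simp [hhead])
      exact Or.inl ⟨_, Path.mem_visits.2 ⟨⟨by omega, hlen⟩, congrArg Path.base hseg⟩, hseg⟩
    | some b =>
      have hpos : 0 < p.arrows.length :=
        List.length_pos_iff.2 fun h => by simp [h] at hhead
      have hpb : p.tgtV = Q.tgt b := by rw [Path.tgtV, hhead, Option.elim_some]
      obtain ⟨z, hz⟩ := exists_inArrow_eq_some hQ b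
      have hpz : p.tgtV = z.center := hpb.trans (tgt_inArrow hz)
      obtain ⟨hlen, hseg⟩ := segment_eq_of_permitted hQ hp hpz fun c hc => by rwa [← hc, hhead]
      have hzxy : z = x ∨ z = y := (setOf_center_eq hQ hne hc).subset (hpz.symm.trans hpx)
      obtain rfl | rfl := hzxy
      · exact Or.inl ⟨_, Path.mem_visits.2 ⟨⟨by omega, hlen⟩, congrArg Path.base hseg⟩, hseg⟩
      · exact Or.inr ⟨_, Path.mem_visits.2 ⟨⟨by omega, hlen⟩, congrArg Path.base hseg⟩, hseg⟩
  · rintro (⟨n, hn, rfl⟩ | ⟨n, hn, rfl⟩) <;> rw [Finset.mem_coe, Path.mem_visits] at hn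
    · exact ⟨x.thread.2.permitted.slice _ _, hn.2, x.thread.1.tgtV_slice hn.1.1⟩
    · refine ⟨y.thread.2.permitted.slice _ _, hn.2, ?_⟩
      exact (y.thread.1.tgtV_slice (Nat.le_of_succ_le hn.1.1)).trans hc.symm

theorem disjoint_image_segment (hQ : Q.IsGentle) (hne : x ≠ y) (j : V) :
    Disjoint (x.segment '' x.thread.1.visits x.idx j)
      (y.segment '' y.thread.1.visits (y.idx + 1) j) := by
  refine Set.disjoint_left.2 ?_
  rintro _ ⟨n, hn, rfl⟩ ⟨n', hn', heq⟩
  rw [Finset.mem_coe, Path.mem_visits] at hn hn'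
  have hlen := congrArg (fun p : Path Q => p.arrows.length) heq
  have hhead := congrArg (fun p : Path Q => p.arrows.head?) heq
  simp only [segment, Path.length_arrows_slice _ hn.1.2, Path.length_arrows_slice _ hn'.1.2] at hlen
  simp only [segment, Path.head?_arrows_slice _ (show x.idx < n by omega),
    Path.head?_arrows_slice _ (show y.idx < n' by omega)] at hhead
  have hlt : y.idx < y.thread.1.arrows.length := by omega
  have hy : y.inArrow = some y.thread.1.arrows[y.idx] := by
    rw [inArrow, List.head?_drop, List.getElem?_eq_getElem hlt]
  exact hne (eq_of_inArrow_eq_some hQ (hhead.symm.trans hy) hy)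

theorem cartan_center [Finite A] (hQ : Q.IsGentle) (hne : x ≠ y) (hc : x.center = y.center)
    (j : V) :
    cartan Q x.center j =
      (x.thread.1.visits x.idx j).card + (y.thread.1.visits (y.idx + 1) j).card := by
  have hinj_x : Set.InjOn x.segment (x.thread.1.visits x.idx j) :=
    x.thread.1.injOn_slice x.idx j
  have hinj_y : Set.InjOn y.segment (y.thread.1.visits (y.idx + 1) j) :=
    (y.thread.1.injOn_slice y.idx j).mono (Path.visits_anti (Nat.le_succ _) j)
  have hcard : {p : Path Q | p.Permitted ∧ p.base = j ∧ p.tgtV = x.center}.ncard =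
      (x.thread.1.visits x.idx j).card + (y.thread.1.visits (y.idx + 1) j).card := by
    rw [setOf_permitted_eq hQ hne hc, Set.ncard_union_eq (disjoint_image_segment hQ hne j)
      ((Finset.finite_toSet _).image _) ((Finset.finite_toSet _).image _),
      hinj_x.ncard_image, hinj_y.ncard_image, Set.ncard_coe_finset, Set.ncard_coe_finset]
  exact (congrArg Nat.cast hcard).trans (Nat.cast_add _ _)

end PSplit

/-! ### Anti-walks -/

theorem dInc_apply {W : Type} (e : W ≃ PThread Q) (j : V) (w : W) :
    dInc Q e j w = ((e w).1.visits 0 j).card := by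
  let split : {n // n ∈ (e w).1.visits 0 j} →
      {x : PSplit Q // x.center = j ∧ x.thread = e w} := fun n =>
    ⟨⟨(e w, n), (Path.mem_visits.1 n.2).1.2⟩, (Path.mem_visits.1 n.2).2, rfl⟩
  have hsplit : split.Bijective := by
    refine ⟨fun n n' h => Subtype.ext (congrArg (fun x => x.1.idx) h), ?_⟩
    rintro ⟨⟨⟨t, n⟩, hn⟩, hc, rfl : t = e w⟩
    exact ⟨⟨n, Path.mem_visits.2 ⟨⟨n.zero_le, hn⟩, hc⟩⟩, rfl⟩
  rw [dInc, ← Nat.card_eq_of_bijective split hsplit, Nat.card_eq_finsetCard]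

theorem PSplit.idx_eq_zero_of_forall_not_dSucc (hQ : Q.IsGentle) {x : PSplit Q}
    (hx : ∀ i : DOE Q, ¬ DSucc x i.sS) : x.idx = 0 := by
  by_contra hidx
  obtain ⟨k, hk⟩ := Nat.exists_eq_succ_of_ne_zero hidx
  have := x.idx_le
  let z : PSplit Q := ⟨(x.thread, k), by dsimp only; omega⟩
  obtain ⟨y, hne, hc⟩ := z.exists_ne_center_eq hQ
  exact hx ⟨(y, z), hne.symm, hc.symm⟩ ⟨rfl, hk⟩

theorem PSplit.length_le_idx_of_forall_not_dSucc (hQ : Q.IsGentle) {x : PSplit Q}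
    (hx : ∀ i : DOE Q, ¬ DSucc i.tS x) : x.thread.1.arrows.length ≤ x.idx := by
  by_contra! hidx
  let z : PSplit Q := ⟨(x.thread, x.idx + 1), hidx⟩
  obtain ⟨y, hne, hc⟩ := z.exists_ne_center_eq hQ
  exact hx ⟨(z, y), hne, hc⟩ ⟨rfl, rfl⟩

theorem incVec_cons (i : DOE Q) (l : List (DOE Q)) :
    incVec (i :: l) = Pi.single i.ctr 1 - incVec l := by
  ext v
  simp [incVec, Pi.single_apply, eq_comm]

section Finite

variable [Fintype V] [Finite A]

theorem cartan_transpose_mulVec_incVec_cons (hQ : Q.IsGentle) (j : V) (l : List (DOE Q))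
    (i : DOE Q) :
    ((cartan Q)ᵀ *ᵥ incVec (i :: l)) j =
      (i.tS.thread.1.visits i.tS.idx j).card + (i.sS.thread.1.visits (i.sS.idx + 1) j).card -
        ((cartan Q)ᵀ *ᵥ incVec l) j := by
  have hcartan : cartan Q i.ctr j =
      (i.tS.thread.1.visits i.tS.idx j).card + (i.sS.thread.1.visits (i.sS.idx + 1) j).card :=
    PSplit.cartan_center hQ i.2.1 i.2.2 j
  rw [incVec_cons, Matrix.mulVec_sub, Matrix.mulVec_single_one, Pi.sub_apply, Matrix.col_apply,
    Matrix.transpose_apply, hcartan]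

theorem cartan_transpose_mulVec_incVec_of_chain (hQ : Q.IsGentle) (j : V) (i : DOE Q)
    (l : List (DOE Q)) (hchain : (i :: l).IsChain fun i j => DSucc j.tS i.sS)
    (hlast : ∀ i', (i :: l).getLast? = some i' → ∀ i₂ : DOE Q, ¬ DSucc i₂.tS i'.sS) :
    ((cartan Q)ᵀ *ᵥ incVec (i :: l)) j = (i.tS.thread.1.visits i.tS.idx j).card := by
  induction l generalizing i with
  | nil =>
    have hlen := PSplit.length_le_idx_of_forall_not_dSucc hQ (hlast i rfl)
    have hnil : incVec ([] : List (DOE Q)) = 0 := rfl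
    rw [cartan_transpose_mulVec_incVec_cons hQ, Path.visits_eq_empty (Nat.lt_succ_of_le hlen),
      hnil, Matrix.mulVec_zero]
    simp
  | cons k l ih =>
    obtain ⟨⟨hthread, hidx⟩, hchain⟩ := List.isChain_cons_cons.1 hchain
    have hk := ih k hchain fun i' hi' => hlast i' (by rwa [List.getLast?_cons_cons])
    rw [cartan_transpose_mulVec_incVec_cons hQ, hk, hthread, hidx, add_sub_cancel_right]

theorem IsAntiDW.cartan_transpose_mulVec_incVec (hQ : Q.IsGentle) {l : List (DOE Q)}
    (hl : IsAntiDW Q l) {α : PThread Q} (hα : ∀ i, l.head? = some i → i.tvx = α) (j : V) :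
    ((cartan Q)ᵀ *ᵥ incVec l) j = (α.1.visits 0 j).card := by
  obtain ⟨hne, -, hchain, hfirst, hlast⟩ := hl
  obtain ⟨i, l, rfl⟩ := List.exists_cons_of_ne_nil hne
  have hidx : i.tS.idx = 0 := PSplit.idx_eq_zero_of_forall_not_dSucc hQ (hfirst i rfl)
  rw [cartan_transpose_mulVec_incVec_of_chain hQ j i l hchain hlast, hidx, ← hα i rfl]
  rfl

end Finite

end BQuiv

/-- Let `(Q, I)` be a gentle bound quiver with marked ribbon graph
`(G, ≤) = △(Q, I)` and Cartan matrix `C`, identify `E(G)` with `Q₀`, and let `Ĵ` be the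
`E(G) × V(G)` integer matrix whose column at a vertex `α` of `G` is the incidence
vector of the unique anti-walk of `(G, ≤)` with target vertex `α`.  Then
`Cᵀ ⬝ Ĵ = Inc(G)`. -/
theorem stmt14 {V A : Type} [Fintype V] [Fintype A] (Q : BQuiv V A) (hQ : Q.IsGentle)
    (W : Type) [Fintype W] (e : W ≃ PThread Q) (J : Matrix V W ℤ)
    (hJ : ∀ w : W, ∃ l : List (DOE Q), IsAntiDW Q l ∧
      (∀ i, l.head? = some i → DOE.tvx i = e w) ∧
      (∀ v : V, J v w = incVec l v)) :
    (cartan Q)ᵀ * J = dInc Q e := by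
  ext j w
  obtain ⟨l, hl, htarget, hcol⟩ := hJ w
  have hJw : J.col w = incVec l := funext hcol
  rw [dInc_apply, ← hl.cartan_transpose_mulVec_incVec hQ htarget j, ← hJw]
  rfl
end

section
/- Let (G,≤) be a marked ribbon graph. For a vertex α let Ǒ_α denote the unique anti-walk with target vertex α, and set ᵗǑ_α := (Ǒ_α)^{-1}. For a non-trivial reduced walk w of G with source vertex α and target vertex β, define ₊w := ᵗǑ_β · w, w₊ := w · Ǒ_α, and ₊w₊ := ᵗǑ_β · w · Ǒ_α, where · denotes reduced concatenation. Then ₊w₊ is a non-trivial reduced walk, and at most one of the walks ₊w and w₊ is trivial. -/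
set_option autoImplicit false

attribute [local instance] Classical.propDecidable

/-- A marked ribbon graph `(G, ≤)`: a finite graph given by half-edges (a set `H` of
half-edges with an incidence map `z : H → V` and a fixed-point-free involution `ι`
whose orbits are the edges), together with a partial order `≤` on `H` in which two
half-edges are comparable exactly when they are incident to the same vertex; the graph
is required to be connected, without isolated vertices (`z` surjective) and with a
vertex of degree at least two. -/
structure MRG (V H : Type) where
  z : H → V
  invh : H → H
  inv_inv : ∀ h, invh (invh h) = h
  inv_ne : ∀ h, invh h ≠ h
  z_surj : Function.Surjective z
  le : H → H → Prop
  le_refl : ∀ h, le h h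
  le_trans : ∀ {a b c}, le a b → le b c → le a c
  le_antisymm : ∀ {a b}, le a b → le b a → a = b
  comp_iff : ∀ a b, (le a b ∨ le b a) ↔ z a = z b
  connected : ∀ u v : V,
    Relation.ReflTransGen (fun x y => ∃ h, z h = x ∧ z (invh h) = y) u v
  thick : ∃ h h' : H, h ≠ h' ∧ z h = z h'

namespace MRG

variable {V H : Type}

/-- The type of edges of the graph: orbits of the involution. -/
def E (G : MRG V H) : Type := Quot (fun a b : H => b = G.invh a)

/-- The edge containing a given half-edge. -/
def edge (G : MRG V H) (h : H) : G.E := Quot.mk _ h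

/-- The strict order on half-edges. -/
def lt (G : MRG V H) (a b : H) : Prop := G.le a b ∧ a ≠ b

/-- `b` covers `a`: `a` is a direct predecessor of `b` (equivalently `b` is the direct
successor of `a`) with respect to `≤`. -/
def Cov (G : MRG V H) (a b : H) : Prop :=
  G.lt a b ∧ ∀ c, G.lt a c → G.lt c b → False

end MRG

namespace MRG

variable {V H : Type}

/-- An ordered edge of the graph: a pair `(h′, h″)` of half-edges with `h″ = ι h′`;
the first component is the target half-edge, the second the source half-edge. -/
def OE (G : MRG V H) : Type := {p : H × H // p.2 = G.invh p.1}

/-- The target half-edge of an ordered edge. -/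
def OE.tH {G : MRG V H} (i : OE G) : H := i.1.1

/-- The source half-edge of an ordered edge. -/
def OE.sH {G : MRG V H} (i : OE G) : H := i.1.2

/-- The target vertex of an ordered edge. -/
def OE.tvx {G : MRG V H} (i : OE G) : V := G.z i.1.1

/-- The source vertex of an ordered edge. -/
def OE.svx {G : MRG V H} (i : OE G) : V := G.z i.1.2

/-- The inverse of an ordered edge. -/
def OE.inv {G : MRG V H} (i : OE G) : OE G :=
  ⟨(i.1.2, i.1.1), by rw [i.2, G.inv_inv]⟩

/-- `l` is (the list of ordered edges of) a walk of `G`, written from right to left. -/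
def IsWalkL (G : MRG V H) (l : List (OE G)) : Prop :=
  l.Chain' (fun i j => OE.svx i = OE.tvx j)

/-- The walk `l` is reduced: no ordered edge is immediately followed by its inverse. -/
def IsRedL (G : MRG V H) (l : List (OE G)) : Prop :=
  l.Chain' (fun i j => j ≠ OE.inv i)

/-- `b` is the direct successor of `a` with respect to `≤`. -/
def DSucc (G : MRG V H) (a b : H) : Prop := G.Cov a b

/-- Anti-walks of `(G, ≤)`: non-trivial walks `i₁⋯i_L i_{L+1}` in which, for
consecutive ordered edges, the source half-edge of `iₜ` is the direct successor of the
target half-edge of `iₜ₊₁` with respect to `≤`, maximal with this property. -/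
def IsAntiWalkL (G : MRG V H) (l : List (OE G)) : Prop :=
  l ≠ [] ∧ G.IsWalkL l ∧
  l.Chain' (fun i j => G.DSucc (OE.tH j) (OE.sH i)) ∧
  (∀ i, l.head? = some i → ∀ i0 : OE G, ¬ G.DSucc (OE.tH i) (OE.sH i0)) ∧
  (∀ i, l.getLast? = some i → ∀ i2 : OE G, ¬ G.DSucc (OE.tH i2) (OE.sH i))

end MRG

namespace MRG

variable {V H : Type}

/-- Auxiliary greedy cancellation: the first argument is the first walk reversed. -/
noncomputable def rcatAux {G : MRG V H} : List (OE G) → List (OE G) → List (OE G)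
  | [], l2 => l2
  | a :: r1, [] => (a :: r1).reverse
  | a :: r1, b :: r2 =>
      if b = OE.inv a then rcatAux r1 r2 else (a :: r1).reverse ++ b :: r2

/-- The reduced concatenation `l₁ · l₂` of two (reduced) walks: write `l₁ = l₁′ u` and
`l₂ = u⁻¹ l₂″` with the common walk `u` of maximal length and set
`l₁ · l₂ = l₁′ l₂″`. -/
noncomputable def rcat {G : MRG V H} (l1 l2 : List (OE G)) : List (OE G) :=
  rcatAux l1.reverse l2

/-- The inverse of a walk. -/
def invL {G : MRG V H} (l : List (OE G)) : List (OE G) := (l.map OE.inv).reverse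

end MRG

open MRG

/-!
If `₊w₊` is trivial, then `Ǒ_α` is the inverse of `ᵗǑ_β · w`, so `Ǒ_α` and `Ǒ_β` have the same
source vertex. An anti-walk is determined by its source vertex: its first ordered edge leaves
along the least half-edge there, and each further one along the direct successor of the half-edge
just reached. Hence `Ǒ_α = Ǒ_β`, and `(Ǒ_β)⁻¹ · w = (Ǒ_β)⁻¹` forces the reduced walk `w` to be
trivial. If `₊w` and `w₊` are both trivial, then `w = Ǒ_β` and `w⁻¹ = Ǒ_α` are both anti-walks. Two
consecutive ordered edges of `w` would give half-edges that cover each other, so `w` is a single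
ordered edge whose two half-edges are alone over their vertices; by connectedness it is the whole
graph, which then has no vertex of degree at least two.
-/

namespace MRG

section Chains

variable {α : Type*} {R : α → α → Prop}

theorem eq_of_isChain_of_rightUnique (hR : Relator.RightUnique R) {l₁ l₂ : List α}
    (h₁ : l₁.IsChain R) (h₂ : l₂.IsChain R) (hhead : l₁.head? = l₂.head?)
    (hmax₁ : ∀ a ∈ l₁.getLast?, ∀ b, ¬ R a b) (hmax₂ : ∀ a ∈ l₂.getLast?, ∀ b, ¬ R a b) :
    l₁ = l₂ := by
  induction l₁ generalizing l₂ with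
  | nil => simpa [eq_comm] using hhead
  | cons a l₁ ih =>
    obtain ⟨l₂, rfl⟩ : ∃ l, l₂ = a :: l := List.head?_eq_some_iff.1 hhead.symm
    match l₁, l₂ with
    | [], [] => rfl
    | [], b :: _ => exact (hmax₁ a rfl b (List.isChain_cons_cons.1 h₂).1).elim
    | b :: _, [] => exact (hmax₂ a rfl b (List.isChain_cons_cons.1 h₁).1).elim
    | b :: l₁, c :: l₂ =>
      rw [List.isChain_cons_cons] at h₁ h₂
      obtain rfl : b = c := hR h₁.1 h₂.1
      rw [List.getLast?_cons_cons] at hmax₁ hmax₂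
      rw [ih h₁.2 h₂.2 rfl hmax₁ hmax₂]

end Chains

variable {V H : Type}

section Order

variable (G : MRG V H)

/-- The order on half-edges of a marked ribbon graph is locally finite: all its intervals are
finite. It is phrased for `G.le`, since `H` carries no order instance. -/
def HasFiniteIntervals : Prop := ∀ a b, {c | G.le a c ∧ G.le c b}.Finite

/-- The order on half-edges as an order instance, which gives access to the library's theory of
covers. -/
abbrev partialOrder : PartialOrder H where
  le := G.le
  le_refl := G.le_refl
  le_trans _ _ _ := G.le_trans
  le_antisymm _ _ := G.le_antisymm

variable {G} {a b c : H}

theorem lt_iff_partialOrder_lt : G.lt a b ↔ G.partialOrder.lt a b :=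
  (@lt_iff_le_and_ne H G.partialOrder a b).symm

theorem cov_iff_covBy : G.Cov a b ↔ @CovBy H G.partialOrder.toLT a b := by
  simp only [Cov, CovBy, lt_iff_partialOrder_lt, imp_false]

theorem lt.exists_directSucc (hG : G.HasFiniteIntervals) (h : G.lt a b) : ∃ c, G.Cov a c := by
  let := G.partialOrder
  let := LocallyFiniteOrder.ofFiniteIcc hG
  obtain ⟨c, hc, -⟩ := exists_covBy_le_of_lt (lt_iff_partialOrder_lt.1 h)
  exact ⟨c, cov_iff_covBy.2 hc⟩

theorem lt.exists_directPred (hG : G.HasFiniteIntervals) (h : G.lt a b) : ∃ c, G.Cov c b := by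
  let := G.partialOrder
  let := LocallyFiniteOrder.ofFiniteIcc hG
  obtain ⟨c, -, hc⟩ := exists_le_covBy_of_lt (lt_iff_partialOrder_lt.1 h)
  exact ⟨c, cov_iff_covBy.2 hc⟩

theorem Cov.z_eq (h : G.Cov a b) : G.z a = G.z b :=
  (G.comp_iff a b).1 (Or.inl h.1.1)

theorem Cov.not_cov (h : G.Cov a b) : ¬ G.Cov b a :=
  fun h' => h.1.2 (G.le_antisymm h.1.1 h'.1.1)

theorem lt_trichotomy_of_z_eq (h : G.z a = G.z b) : G.lt a b ∨ a = b ∨ G.lt b a := by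
  rcases eq_or_ne a b with hab | hab
  · exact Or.inr (Or.inl hab)
  · exact ((G.comp_iff a b).2 h).imp (fun hle => ⟨hle, hab⟩) fun hle => Or.inr ⟨hle, hab.symm⟩

theorem Cov.right_unique (hb : G.Cov a b) (hc : G.Cov a c) : b = c := by
  rcases lt_trichotomy_of_z_eq (hb.z_eq.symm.trans hc.z_eq) with hlt | heq | hlt
  · exact (hc.2 b hb.1 hlt).elim
  · exact heq
  · exact (hb.2 c hc.1 hlt).elim

theorem eq_of_z_eq_of_forall_not_cov (hG : G.HasFiniteIntervals) (h : G.z a = G.z b)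
    (ha : ∀ c, ¬ G.Cov c a) (hb : ∀ c, ¬ G.Cov c b) : a = b := by
  rcases lt_trichotomy_of_z_eq h with hlt | heq | hlt
  · exact ((hlt.exists_directPred hG).elim hb).elim
  · exact heq
  · exact ((hlt.exists_directPred hG).elim ha).elim

theorem eq_of_z_eq_of_isolated (hG : G.HasFiniteIntervals) (h : G.z a = G.z b)
    (hpred : ∀ c, ¬ G.Cov c a) (hsucc : ∀ c, ¬ G.Cov a c) : a = b := by
  rcases lt_trichotomy_of_z_eq h with hlt | heq | hlt
  · exact ((hlt.exists_directSucc hG).elim hsucc).elim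
  · exact heq
  · exact ((hlt.exists_directPred hG).elim hpred).elim

end Order

section Connectedness

variable {G : MRG V H}

theorem mem_of_z_saturated_of_invh_mem {S : Set H} (hz : ∀ a ∈ S, ∀ b, G.z a = G.z b → b ∈ S)
    (hinv : ∀ a ∈ S, G.invh a ∈ S) {a : H} (ha : a ∈ S) (b : H) : b ∈ S := by
  suffices ∀ v, Relation.ReflTransGen (fun x y => ∃ h, G.z h = x ∧ G.z (G.invh h) = y) (G.z a) v →
      ∀ c, G.z c = v → c ∈ S from this _ (G.connected _ _) b rfl
  intro v hv
  induction hv with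
  | refl => exact fun c hc => hz a ha c hc.symm
  | tail _ hstep ih =>
    obtain ⟨h, hx, rfl⟩ := hstep
    exact fun c hc => hz _ (hinv h (ih h hx)) c hc.symm

theorem not_isolated_edge (G : MRG V H) (h : H) :
    ¬ ((∀ k, G.z h = G.z k → h = k) ∧ ∀ k, G.z (G.invh h) = G.z k → G.invh h = k) := by
  rintro ⟨hh, hh'⟩
  let S : Set H := {h, G.invh h}
  have hz : ∀ a ∈ S, ∀ b, G.z a = G.z b → b ∈ S := by
    rintro _ (rfl | rfl) b hb
    · exact Or.inl (hh b hb).symm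
    · exact Or.inr (hh' b hb).symm
  have hinv : ∀ a ∈ S, G.invh a ∈ S := by
    rintro _ (rfl | rfl)
    · exact Or.inr rfl
    · exact Or.inl (G.inv_inv h)
  obtain ⟨k, k', hne, hkk'⟩ := G.thick
  rcases mem_of_z_saturated_of_invh_mem hz hinv (Or.inl rfl) k with rfl | rfl
  · exact hne (hh k' hkk')
  · exact hne (hh' k' hkk')

end Connectedness

variable {G : MRG V H}

section OrderedEdges

theorem OE.tH_surjective : Function.Surjective (OE.tH : OE G → H) :=
  fun h => ⟨⟨(h, G.invh h), rfl⟩, rfl⟩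

theorem OE.sH_surjective : Function.Surjective (OE.sH : OE G → H) :=
  fun h => ⟨⟨(G.invh h, h), (G.inv_inv h).symm⟩, rfl⟩

theorem OE.tH_eq_invh_sH (i : OE G) : i.tH = G.invh i.sH := by
  rw [OE.sH, i.2, G.inv_inv, OE.tH]

theorem OE.sH_injective : Function.Injective (OE.sH : OE G → H) := fun i j h =>
  Subtype.ext (Prod.ext (by rw [← OE.tH, ← OE.tH, i.tH_eq_invh_sH, j.tH_eq_invh_sH, h]) h)

end OrderedEdges

section Inverse

variable {l : List (OE G)}

@[simp]
theorem invL_nil : invL ([] : List (OE G)) = [] := rfl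

@[simp]
theorem invL_cons (i : OE G) (l : List (OE G)) : invL (i :: l) = invL l ++ [i.inv] := by
  simp [invL]

theorem invL_append (l₁ l₂ : List (OE G)) : invL (l₁ ++ l₂) = invL l₂ ++ invL l₁ := by
  simp [invL]

theorem invL_invL (l : List (OE G)) : invL (invL l) = l := by
  have hinv : (OE.inv ∘ OE.inv : OE G → OE G) = id := rfl
  simp [invL, hinv]

theorem IsRedL.invL (h : G.IsRedL l) : G.IsRedL (invL l) := by
  refine List.isChain_reverse.2 ((List.isChain_map OE.inv).2 (List.IsChain.imp ?_ h))
  rintro i j hij hinv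
  exact hij hinv.symm

theorem eq_nil_of_isRedL_invL_append_self (h : G.IsRedL (invL l ++ l)) : l = [] := by
  cases l with
  | nil => rfl
  | cons i l => exact ((List.isChain_append.1 h).2.2 i.inv (by simp) i rfl rfl).elim

end Inverse

section Endpoints

/-- `G.IsWalkBetween β l α` says that `l` is a walk with target vertex `β` and source vertex `α`,
in the right-to-left order of the paper. Unlike the edge list alone, it records the endpoints of
trivial walks. -/
def IsWalkBetween (G : MRG V H) : V → List (OE G) → V → Prop
  | β, [], α => β = α
  | β, i :: l, α => i.tvx = β ∧ G.IsWalkBetween i.svx l α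

variable {α β β' : V} {l l₁ l₂ : List (OE G)}

theorem isWalkBetween_append :
    G.IsWalkBetween β (l₁ ++ l₂) α ↔ ∃ γ, G.IsWalkBetween β l₁ γ ∧ G.IsWalkBetween γ l₂ α := by
  induction l₁ generalizing β with
  | nil => simp [IsWalkBetween]
  | cons i l₁ ih => simp [IsWalkBetween, ih, and_assoc]

theorem IsWalkBetween.invL (h : G.IsWalkBetween β l α) : G.IsWalkBetween α (invL l) β := by
  induction l generalizing β with
  | nil => exact Eq.symm h
  | cons i l ih =>
    rw [invL_cons, isWalkBetween_append]
    exact ⟨i.svx, ih h.2, rfl, h.1⟩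

theorem IsWalkBetween.target_unique (h : G.IsWalkBetween β l α) (h' : G.IsWalkBetween β' l α) :
    β = β' := by
  cases l with
  | nil => exact Eq.trans h (Eq.symm h')
  | cons i l => exact h.1.symm.trans h'.1

theorem IsWalkBetween.isWalkL (h : G.IsWalkBetween β l α) : G.IsWalkL l := by
  induction l generalizing β with
  | nil => exact List.isChain_nil
  | cons i l ih =>
    refine List.isChain_cons.2 ⟨fun j hj => ?_, ih h.2⟩
    obtain ⟨l, rfl⟩ := List.head?_eq_some_iff.1 hj
    exact h.2.1.symm

theorem IsWalkL.isWalkBetween (h : G.IsWalkL l) (hl : l ≠ []) :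
    G.IsWalkBetween (l.head hl).tvx l (l.getLast hl).svx := by
  induction l with
  | nil => exact (hl rfl).elim
  | cons i l ih =>
    cases l with
    | nil => exact ⟨rfl, rfl⟩
    | cons j l =>
      obtain ⟨hij, h⟩ := List.isChain_cons_cons.1 h
      exact ⟨rfl, hij.symm ▸ ih h (List.cons_ne_nil j l)⟩

end Endpoints

section ReducedConcatenation

variable {α β γ : V} {l₁ l₂ : List (OE G)}

theorem exists_rcatAux_eq_append (r l : List (OE G)) :
    ∃ p u q, r.reverse = p ++ u ∧ l = invL u ++ q ∧ rcatAux r l = p ++ q ∧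
      ∀ i ∈ p.getLast?, ∀ j ∈ q.head?, j ≠ i.inv := by
  induction r generalizing l with
  | nil => exact ⟨[], [], l, rfl, rfl, rfl, by simp⟩
  | cons a r ih =>
    cases l with
    | nil => exact ⟨(a :: r).reverse, [], [], by simp, rfl, by simp [rcatAux], by simp⟩
    | cons b l =>
      by_cases hb : b = a.inv
      · obtain ⟨p, u, q, hr, hl, hcat, hred⟩ := ih l
        exact ⟨p, u ++ [a], q, by simp [hr], by simp [hb, hl, invL_append],
          by rw [rcatAux, if_pos hb, hcat], hred⟩
      · exact ⟨(a :: r).reverse, [], b :: l, by simp, rfl, by rw [rcatAux, if_neg hb],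
          by simpa using hb⟩

theorem exists_rcat_eq_append (l₁ l₂ : List (OE G)) :
    ∃ p u q, l₁ = p ++ u ∧ l₂ = invL u ++ q ∧ rcat l₁ l₂ = p ++ q ∧
      ∀ i ∈ p.getLast?, ∀ j ∈ q.head?, j ≠ i.inv := by
  simpa only [rcat, List.reverse_reverse] using exists_rcatAux_eq_append l₁.reverse l₂

theorem IsRedL.rcat (h₁ : G.IsRedL l₁) (h₂ : G.IsRedL l₂) : G.IsRedL (rcat l₁ l₂) := by
  obtain ⟨p, u, q, rfl, rfl, hcat, hred⟩ := exists_rcat_eq_append l₁ l₂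
  rw [hcat]
  exact List.isChain_append.2
    ⟨(List.isChain_append.1 h₁).1, (List.isChain_append.1 h₂).2.1, hred⟩

theorem IsWalkBetween.rcat (h₁ : G.IsWalkBetween β l₁ γ) (h₂ : G.IsWalkBetween γ l₂ α) :
    G.IsWalkBetween β (rcat l₁ l₂) α := by
  obtain ⟨p, u, q, rfl, rfl, hcat, -⟩ := exists_rcat_eq_append l₁ l₂
  obtain ⟨δ, hp, hu⟩ := isWalkBetween_append.1 h₁
  obtain ⟨δ', hu', hq⟩ := isWalkBetween_append.1 h₂
  obtain rfl : δ = δ' := hu.target_unique (invL_invL u ▸ hu'.invL)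
  exact hcat ▸ isWalkBetween_append.2 ⟨δ, hp, hq⟩

theorem eq_invL_of_rcat_eq_nil (h : rcat l₁ l₂ = []) : l₂ = invL l₁ := by
  obtain ⟨p, u, q, rfl, rfl, hcat, -⟩ := exists_rcat_eq_append l₁ l₂
  obtain ⟨rfl, rfl⟩ := List.append_eq_nil_iff.1 (hcat.symm.trans h)
  simp

theorem eq_nil_of_rcat_eq_left (h₂ : G.IsRedL l₂) (h : rcat l₁ l₂ = l₁) : l₂ = [] := by
  obtain ⟨p, u, q, rfl, rfl, hcat, -⟩ := exists_rcat_eq_append l₁ l₂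
  obtain rfl : q = u := List.append_cancel_left (hcat.symm.trans h)
  simp [eq_nil_of_isRedL_invL_append_self h₂]

end ReducedConcatenation

section AntiWalks

variable {l l₁ l₂ : List (OE G)} {i j : OE G}

theorem IsAntiWalkL.isRedL (h : G.IsAntiWalkL l) : G.IsRedL l := by
  refine List.IsChain.imp ?_ h.2.2.1
  rintro i _ hcov rfl
  exact hcov.1.2 rfl

theorem IsAntiWalkL.not_cov_tH_head (h : G.IsAntiWalkL l) (hi : l.head? = some i) (a : H) :
    ¬ G.Cov i.tH a := by
  obtain ⟨j, rfl⟩ := OE.sH_surjective (G := G) a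
  exact h.2.2.2.1 i hi j

theorem IsAntiWalkL.not_cov_sH_getLast (h : G.IsAntiWalkL l) (hi : l.getLast? = some i) (a : H) :
    ¬ G.Cov a i.sH := by
  obtain ⟨j, rfl⟩ := OE.tH_surjective (G := G) a
  exact h.2.2.2.2 i hi j

theorem IsAntiWalkL.eq_of_getLast?_eq (h₁ : G.IsAntiWalkL l₁) (h₂ : G.IsAntiWalkL l₂)
    (hlast : l₁.getLast? = l₂.getLast?) : l₁ = l₂ := by
  have hR : Relator.RightUnique fun i j : OE G => G.Cov i.tH j.sH :=
    fun _ _ _ hb hc => OE.sH_injective (hb.right_unique hc)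
  refine List.reverse_injective (eq_of_isChain_of_rightUnique hR
    (List.isChain_reverse.2 h₁.2.2.1) (List.isChain_reverse.2 h₂.2.2.1) (by simpa) ?_ ?_)
  · exact fun i hi j => h₁.not_cov_tH_head (by simpa using hi) j.sH
  · exact fun i hi j => h₂.not_cov_tH_head (by simpa using hi) j.sH

theorem IsAntiWalkL.eq_of_svx_getLast_eq (hG : G.HasFiniteIntervals) (h₁ : G.IsAntiWalkL l₁)
    (h₂ : G.IsAntiWalkL l₂) (h : (l₁.getLast h₁.1).svx = (l₂.getLast h₂.1).svx) : l₁ = l₂ := by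
  have hl₁ := List.getLast?_eq_some_getLast h₁.1
  have hl₂ := List.getLast?_eq_some_getLast h₂.1
  have hlast : l₁.getLast h₁.1 = l₂.getLast h₂.1 := OE.sH_injective
    (eq_of_z_eq_of_forall_not_cov hG h (h₁.not_cov_sH_getLast hl₁) (h₂.not_cov_sH_getLast hl₂))
  exact h₁.eq_of_getLast?_eq h₂ (by rw [hl₁, hl₂, hlast])

theorem not_isAntiWalkL_singleton_and_inv (hG : G.HasFiniteIntervals) (i : OE G) :
    ¬ (G.IsAntiWalkL [i] ∧ G.IsAntiWalkL [i.inv]) := by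
  rintro ⟨h, h'⟩
  refine not_isolated_edge G i.sH ⟨fun k hk => ?_, fun k hk => ?_⟩
  · exact eq_of_z_eq_of_isolated hG hk (h.not_cov_sH_getLast rfl) (h'.not_cov_tH_head rfl)
  · rw [← i.tH_eq_invh_sH] at hk ⊢
    exact eq_of_z_eq_of_isolated hG hk (h'.not_cov_sH_getLast rfl) (h.not_cov_tH_head rfl)

theorem IsAntiWalkL.not_isAntiWalkL_invL (hG : G.HasFiniteIntervals) (h : G.IsAntiWalkL l) :
    ¬ G.IsAntiWalkL (MRG.invL l) := by
  intro h'
  match l with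
  | [] => exact h.1 rfl
  | [i] => exact not_isAntiWalkL_singleton_and_inv hG i ⟨h, h'⟩
  | i :: j :: l =>
    have hcov : G.Cov j.tH i.sH := (List.isChain_cons_cons.1 h.2.2.1).1
    have hchain := h'.2.2.1
    rw [invL_cons, invL_cons, List.append_assoc] at hchain
    have hcov' : G.Cov i.sH j.tH :=
      (List.isChain_cons_cons.1 (List.isChain_append.1 hchain).2.1).1
    exact hcov.not_cov hcov'

end AntiWalks

end MRG

theorem stmt17_general {V H : Type} (G : MRG V H) (hG : G.HasFiniteIntervals)
    (w wa wb : List (OE G)) (hw : w ≠ []) (hwW : G.IsWalkL w) (hwR : G.IsRedL w)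
    (hwa : G.IsAntiWalkL wa) (hwb : G.IsAntiWalkL wb)
    (ha : ∀ i, wa.head? = some i → OE.tvx i = OE.svx (w.getLast hw))
    (hb : ∀ i, wb.head? = some i → OE.tvx i = OE.tvx (w.head hw)) :
    rcat (rcat (invL wb) w) wa ≠ [] ∧
    G.IsWalkL (rcat (rcat (invL wb) w) wa) ∧
    G.IsRedL (rcat (rcat (invL wb) w) wa) ∧
    ¬ (rcat (invL wb) w = [] ∧ rcat w wa = []) := by
  have hwalk := hwW.isWalkBetween hw
  have hwalka := hwa.2.1.isWalkBetween hwa.1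
  have hwalkb := hwb.2.1.isWalkBetween hwb.1
  rw [ha _ (List.head?_eq_some_head hwa.1)] at hwalka
  rw [hb _ (List.head?_eq_some_head hwb.1)] at hwalkb
  have hleft := hwalkb.invL.rcat hwalk
  refine ⟨fun hnil => ?_, (hleft.rcat hwalka).isWalkL,
    (hwb.isRedL.invL.rcat hwR).rcat hwa.isRedL, ?_⟩
  · have hinv : wa = invL (rcat (invL wb) w) := eq_invL_of_rcat_eq_nil hnil
    have hcat : rcat (invL wb) w = invL wa := by rw [hinv, invL_invL]
    obtain rfl : wa = wb := hwa.eq_of_svx_getLast_eq hG hwb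
      (hwalka.invL.target_unique (hcat ▸ hleft))
    exact hw (eq_nil_of_rcat_eq_left hwR hcat)
  · rintro ⟨hleft_nil, hright_nil⟩
    obtain rfl : w = wb := (eq_invL_of_rcat_eq_nil hleft_nil).trans (invL_invL wb)
    exact hwb.not_isAntiWalkL_invL hG (eq_invL_of_rcat_eq_nil hright_nil ▸ hwa)

/-- Let `(G, ≤)` be a marked ribbon graph.  For a vertex `α` let
`Ǒ_α` be the (unique) anti-walk with target vertex `α` and `ᵗǑ_α := (Ǒ_α)⁻¹`.  For a
non-trivial reduced walk `w` with source vertex `α` and target vertex `β`, set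
`₊w := ᵗǑ_β · w`, `w₊ := w · Ǒ_α` and `₊w₊ := ᵗǑ_β · w · Ǒ_α` (reduced
concatenations).  Then `₊w₊` is a non-trivial reduced walk, and at most one of the
walks `₊w` and `w₊` is trivial. -/
theorem stmt17 {V H : Type} [Fintype V] [Fintype H] (G : MRG V H)
    (w wa wb : List (OE G)) (hw : w ≠ []) (hwW : G.IsWalkL w) (hwR : G.IsRedL w)
    (hwa : G.IsAntiWalkL wa) (hwb : G.IsAntiWalkL wb)
    (ha : ∀ i, wa.head? = some i → OE.tvx i = OE.svx (w.getLast hw))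
    (hb : ∀ i, wb.head? = some i → OE.tvx i = OE.tvx (w.head hw)) :
    rcat (rcat (invL wb) w) wa ≠ [] ∧
    G.IsWalkL (rcat (rcat (invL wb) w) wa) ∧
    G.IsRedL (rcat (rcat (invL wb) w) wa) ∧
    ¬ (rcat (invL wb) w = [] ∧ rcat w wa = []) :=
  stmt17_general G (fun _ _ => Set.toFinite _) w wa wb hw hwW hwR hwa hwb ha hb
end

section
/- Let R be a commutative ring, let C be an n × n matrix over R and let J, N be n × m matrices over R such that C^tr·J = N and C + C^tr = N·N^tr. Then (I_n − J·J^tr·C^tr)·(I_n − J·J^tr·C) = I_n; in particular, the matrix I_n − J·J^tr·C^tr is invertible with inverse I_n − J·J^tr·C. (Applied with C the Cartan matrix of a gentle bound quiver, J = Ĵ the matrix whose columns are the incidence vectors of the anti-walks of the associated marked ribbon graph (G,≤), and N = Inc(G), this shows that the Coxeter transformation Ψ_A = I_n − ĴĴ^trC^tr of the gentle algebra A = kQ/I, in the basis of indecomposable projectives, is invertible with inverse I_n − ĴĴ^trC.) -/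
set_option autoImplicit false

open scoped Matrix

/-!
Writing `P = J Jᴴ`, the two hypotheses merge into the single relation `Cᴴ P C = N Nᴴ = C + Cᴴ`.
It makes the quadratic term of `(1 - P Cᴴ) (1 - P C)` cancel the linear ones. The product in the
other order is `1` as well, since one-sided inverses of square matrices over a stably finite ring
are two-sided.
-/

theorem one_sub_mul_mul_one_sub_mul_eq_one {A : Type*} [Ring A] {p c d : A}
    (h : d * p * c = c + d) : (1 - p * d) * (1 - p * c) = 1 := by
  have quadratic_term : p * d * (p * c) = p * c + p * d := by
    calc p * d * (p * c) = p * (d * p * c) := by simp only [mul_assoc]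
      _ = p * c + p * d := by rw [h, mul_add]
  rw [sub_mul, mul_sub, mul_sub, quadratic_term, one_mul, one_mul, mul_one]
  abel

theorem conjTranspose_mul_mul_conjTranspose_mul {R l m n : Type*} [NonUnitalSemiring R] [StarRing R]
    [Fintype m] [Fintype n] (C : Matrix n l R) (J : Matrix n m R) :
    Cᴴ * (J * Jᴴ) * C = Cᴴ * J * (Cᴴ * J)ᴴ := by
  simp only [Matrix.conjTranspose_mul, Matrix.conjTranspose_conjTranspose, Matrix.mul_assoc]

theorem stmt18_general {R n m : Type*} [Ring R] [StarRing R] [IsStablyFiniteRing R]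
    [Fintype n] [Fintype m] [DecidableEq n] (C : Matrix n n R) (J N : Matrix n m R)
    (h1 : Cᴴ * J = N) (h2 : C + Cᴴ = N * Nᴴ) :
    (1 - J * Jᴴ * Cᴴ) * (1 - J * Jᴴ * C) = 1 ∧
    (1 - J * Jᴴ * C) * (1 - J * Jᴴ * Cᴴ) = 1 := by
  have congruence : Cᴴ * (J * Jᴴ) * C = C + Cᴴ := by
    rw [conjTranspose_mul_mul_conjTranspose_mul, h1, h2]
  have left_inverse : (1 - J * Jᴴ * Cᴴ) * (1 - J * Jᴴ * C) = 1 :=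
    one_sub_mul_mul_one_sub_mul_eq_one congruence
  exact ⟨left_inverse, mul_eq_one_comm.mp left_inverse⟩

/-- If `Cᵀ J = N` and `C + Cᵀ = N Nᵀ`, then
`(1 - J Jᵀ Cᵀ) (1 - J Jᵀ C) = 1`; in particular `1 - J Jᵀ Cᵀ` is invertible with
inverse `1 - J Jᵀ C`.  (Applied with `C` the Cartan matrix of a gentle bound quiver,
`J = Ĵ` the matrix of incidence vectors of anti-walks, and `N = Inc(G)`, this shows that
the Coxeter transformation `Ψ_A = 1 - Ĵ Ĵᵀ Cᵀ` is invertible with inverse `1 - Ĵ Ĵᵀ C`.) -/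
theorem stmt18 {R : Type} [CommRing R] {n m : Type} [Fintype n] [Fintype m] [DecidableEq n]
    (C : Matrix n n R) (J N : Matrix n m R)
    (h1 : Cᵀ * J = N) (h2 : C + Cᵀ = N * Nᵀ) :
    (1 - J * Jᵀ * Cᵀ) * (1 - J * Jᵀ * C) = 1 ∧
    (1 - J * Jᵀ * C) * (1 - J * Jᵀ * Cᵀ) = 1 := by
  -- For the identity involution, `ᴴ` is `ᵀ` by definition.
  let : StarRing R := starRingOfComm
  exact stmt18_general C J N h1 h2
end
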